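/- If 1 < q < ∞ and w ∈ RH_q, then there exists p with q < p < ∞ such that w ∈ RH_p. -/

import Mathlib

/-!
The class `RH_q` is open-ended in `q` by Gehring's argument.

A reverse Hölder inequality for `f` on balls prevents `f` from concentrating on a small part of a
ball, so shrinking a ball slightly loses at most half of the mass (`exists_shrink`), and `f dx` is a
doubling measure (`exists_doubling`). Hence the `L^q` norm of `f` on a ball is controlled by the
mean of `f` over the concentric ball five times smaller (`exists_revHolder_five`).

Fix a ball `B`. For `x ∈ B`, the homothetic copies of `B` with centre of homothety `x` are balls
contained in `B`, increasing with the ratio, and shrinking nicely to `x`. If `s` is large compared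
with the mean of `f` on `B`, almost every point with `f x > 2 s` has such a copy on which the mean
of `f` is comparable to `s` but larger than `2 s`. A Vitali covering by five-fold enlargements of
disjoint stopping balls gives (`exists_level_estimate`)
`∫_{B ∩ {f > 2 s}} f ^ q ≤ K s ^ (q - 1) ∫_{B ∩ {f > s}} f`.
Since the stopping balls lie inside `B`, the domain does not grow, and no iteration over radii is
needed. Doubling takes care of the enlargements, which may leave `B`.

Comparing `s ^ (q - 1) f` with `f ^ q` on `{f > s}` turns this into geometric decay of the
`f ^ q dx`-measure of the sets `B ∩ {f > Λ ^ k s}` (`exists_level_decay`). Summing `f ^ ε` over these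
levels with `ε` so small that `Λ ^ ε` does not destroy the decay bounds `∫_B f ^ (q + ε)`
(`exists_revHolder_gt`).
-/

open MeasureTheory Metric Set ENNReal
open scoped NNReal

noncomputable section

/-- Euclidean space `ℝⁿ`. -/
abbrev En (n : ℕ) := EuclideanSpace ℝ (Fin n)

/-- The reverse Hölder class `RH_q` (w.r.t. Lebesgue measure), `1 < q < ∞`. -/
def MemRH {n : ℕ} (w : En n → ℝ) (q : ℝ) : Prop :=
  ∃ C : ℝ≥0, ∀ (x : En n) (r : ℝ), 0 < r →
    (((∫⁻ y in ball x r, ENNReal.ofReal (w y) ^ q) / volume (ball x r)) ^ (1 / q))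
      ≤ (C : ℝ≥0∞) * ((∫⁻ y in ball x r, ENNReal.ofReal (w y)) / volume (ball x r))

/-! ### Doubling -/

/-- The reverse Hölder inequality `⨍ f ^ q ≤ C (⨍ f) ^ q` on all balls, in a form free of
divisions: the number `a` stands for an arbitrary upper bound of the mean value of `f`. -/
def RevHolder {n : ℕ} (f : En n → ℝ≥0∞) (q : ℝ) (C : ℝ≥0) : Prop :=
  ∀ (x : En n) (r : ℝ), 0 < r → ∀ a : ℝ≥0∞,
    ∫⁻ y in ball x r, f y ≤ a * volume (ball x r) →
      ∫⁻ y in ball x r, f y ^ q ≤ C * a ^ q * volume (ball x r)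

lemma volume_ball_mul {n : ℕ} (x y : En n) {k : ℝ} (hk : 0 < k) (r : ℝ) :
    volume (ball x (k * r)) = ENNReal.ofReal k ^ n * volume (ball y r) := by
  rw [Measure.addHaar_ball_mul_of_pos volume x hk, finrank_euclideanSpace_fin,
    ENNReal.ofReal_pow hk.le, Measure.addHaar_ball_center volume y]

lemma rpow_eq_sub_one_mul {q : ℝ} (hq : 1 < q) (u : ℝ≥0∞) : u ^ q = u ^ (q - 1) * u := by
  conv_rhs => rw [← ENNReal.rpow_one u, ← ENNReal.rpow_mul, one_mul]
  rw [← ENNReal.rpow_add_of_nonneg _ _ (by linarith) zero_le_one]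
  congr 1; ring

lemma rpow_sub_one_mul_le {q : ℝ} (hq : 1 < q) {t u : ℝ≥0∞} (h : t ≤ u) :
    t ^ (q - 1) * u ≤ u ^ q := by
  rw [rpow_eq_sub_one_mul hq u]
  gcongr

/-- Slightly shrinking a ball keeps at least half of the mass of `f`: the removed shell has small
volume, and the reverse Hölder inequality forbids `f` from concentrating on a small set. -/
lemma exists_shrink {n : ℕ} {q : ℝ} (hq : 1 < q) {f : En n → ℝ≥0∞} (hf : Measurable f)
    (hfin : ∀ x r, ∫⁻ y in ball x r, f y ≠ ∞) {C : ℝ≥0} (hC : RevHolder f q C) :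
    ∃ σ : ℝ, 0 < σ ∧ σ < 1 ∧ ∀ x r, 0 < r →
      ∫⁻ y in ball x r, f y ≤ 2 * ∫⁻ y in ball x (σ * r), f y := by
  -- `M` times the mean is the cut-off height for `f`, and `η` bounds the proportion of the shell
  obtain ⟨M, hM1, hM⟩ : ∃ M : ℝ≥0, 1 ≤ M ∧ M ^ (q - 1) = 4 * C + 1 := by
    refine ⟨(4 * C + 1) ^ (1 / (q - 1)), NNReal.one_le_rpow (by simp) ?_, ?_⟩
    · have : 0 < q - 1 := by linarith
      positivity
    · rw [← NNReal.rpow_mul, one_div_mul_cancel (by linarith), NNReal.rpow_one]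
  have hM0 : 0 < M := lt_of_lt_of_le one_pos hM1
  set η : ℝ := 1 / (4 * M) with hη
  have hMr : (1 : ℝ) ≤ M := by exact_mod_cast hM1
  have hη0 : 0 < η := by positivity
  have hη1 : η ≤ 1 / 4 := by
    rw [hη]; gcongr; linarith
  have hn1 : (0 : ℝ) < n + 1 := by positivity
  set σ : ℝ := 1 + -(η / (n + 1)) with hσ
  have hd : η / (n + 1) ≤ 1 / 4 := by
    rw [div_le_iff₀ hn1]; nlinarith [(Nat.cast_nonneg n : (0 : ℝ) ≤ n)]
  have hd0 : 0 < η / (n + 1) := by positivity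
  have hσn : 1 - η ≤ σ ^ n := by
    refine le_trans ?_ (one_add_mul_le_pow (a := -(η / (n + 1))) (by linarith) n)
    have : (n : ℝ) * (η / (n + 1)) ≤ η := by
      rw [mul_div_assoc', div_le_iff₀ hn1]; nlinarith
    linarith
  have hσ0 : 0 < σ := by linarith
  refine ⟨σ, hσ0, by linarith, fun x r hr => ?_⟩
  set B := ball x r with hB
  set B' := ball x (σ * r) with hB'
  have hsub : B' ⊆ B := ball_subset_ball (by nlinarith)
  have hV0 : volume B ≠ 0 := (measure_ball_pos volume x hr).ne'
  have hVt : volume B ≠ ∞ := measure_ball_lt_top.ne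
  by_cases hW0 : ∫⁻ y in B, f y = 0
  · rw [hW0]; exact zero_le
  set a : ℝ≥0∞ := (∫⁻ y in B, f y) / volume B with ha
  have haW : a * volume B = ∫⁻ y in B, f y := ENNReal.div_mul_cancel hV0 hVt
  have ha0 : a ≠ 0 := (ENNReal.div_pos hW0 hVt).ne'
  have hat : a ≠ ∞ := ENNReal.div_ne_top (hfin x r) hV0
  have hE : volume (B \ B') ≤ ENNReal.ofReal η * volume B := by
    rw [measure_sdiff hsub measurableSet_ball.nullMeasurableSet measure_ball_lt_top.ne,
      hB', volume_ball_mul x x hσ0, ← hB, tsub_le_iff_right, ← add_mul,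
      ← ENNReal.ofReal_pow hσ0.le, ← ENNReal.ofReal_add hη0.le (by positivity)]
    conv_lhs => rw [← one_mul (volume B)]
    gcongr
    rw [← ENNReal.ofReal_one]
    exact ENNReal.ofReal_le_ofReal (by linarith)
  have hpt : ∀ y, ((M : ℝ≥0∞) * a) ^ (q - 1) * f y ≤ (M * a) ^ q + f y ^ q := by
    intro y
    rcases le_total (f y) (M * a) with h | h
    · refine le_trans ?_ le_self_add
      rw [rpow_eq_sub_one_mul hq (M * a)]; gcongr
    · exact (rpow_sub_one_mul_le hq h).trans le_add_self
  have hMη : (M : ℝ≥0∞) * ENNReal.ofReal η = 4⁻¹ := by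
    rw [← ENNReal.ofReal_coe_nnreal, ← ENNReal.ofReal_mul (by positivity), hη]
    have : (M : ℝ) * (1 / (4 * M)) = 4⁻¹ := by field_simp
    rw [this, ENNReal.ofReal_inv_of_pos (by norm_num)]; simp
  have hMe : (M : ℝ≥0∞) ^ (q - 1) = 4 * C + 1 := by
    rw [← ENNReal.coe_rpow_of_nonneg _ (by linarith), hM]; simp
  have key : ((M : ℝ≥0∞) * a) ^ (q - 1) * ∫⁻ y in B \ B', f y
      ≤ (M * a) ^ (q - 1) * (2⁻¹ * ∫⁻ y in B, f y) := by
    calc ((M : ℝ≥0∞) * a) ^ (q - 1) * ∫⁻ y in B \ B', f y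
        = ∫⁻ y in B \ B', (M * a) ^ (q - 1) * f y := (lintegral_const_mul _ hf).symm
      _ ≤ ∫⁻ y in B \ B', ((M * a) ^ q + f y ^ q) := lintegral_mono fun y => hpt y
      _ = (M * a) ^ q * volume (B \ B') + ∫⁻ y in B \ B', f y ^ q := by
          rw [lintegral_add_left measurable_const]; simp
      _ ≤ (M * a) ^ q * (ENNReal.ofReal η * volume B) + C * a ^ q * volume B := by
          gcongr
          exact (lintegral_mono_set sdiff_subset).trans (hC x r hr a haW.ge)
      _ = a ^ (q - 1) * (M ^ (q - 1) * (M * ENNReal.ofReal η) + C) * (a * volume B) := by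
          rw [rpow_eq_sub_one_mul hq (M * a), rpow_eq_sub_one_mul hq a,
            ENNReal.mul_rpow_of_nonneg _ _ (by linarith)]
          ring
      _ ≤ a ^ (q - 1) * (M ^ (q - 1) * 2⁻¹) * (a * volume B) := by
          gcongr
          rw [hMη, hMe]
          have h4 : (4 : ℝ≥0∞)⁻¹ = ((4⁻¹ : ℝ≥0) : ℝ≥0∞) := by simp
          have h2 : (2 : ℝ≥0∞)⁻¹ = ((2⁻¹ : ℝ≥0) : ℝ≥0∞) := by simp
          rw [h4, h2]
          norm_cast
          rw [← NNReal.coe_le_coe]; push_cast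
          linarith
      _ = (M * a) ^ (q - 1) * (2⁻¹ * ∫⁻ y in B, f y) := by
          rw [haW, ENNReal.mul_rpow_of_nonneg _ _ (by linarith)]; ring
  have hMa0 : (M : ℝ≥0∞) * a ≠ 0 := mul_ne_zero (by simpa using hM0.ne') ha0
  have hMat : (M : ℝ≥0∞) * a ≠ ∞ := ENNReal.mul_ne_top (by simp) hat
  rw [ENNReal.mul_le_mul_iff_right (by simp [ENNReal.rpow_eq_zero_iff, hMa0, hMat])
    (ENNReal.rpow_ne_top_of_nonneg (by linarith) hMat)] at key
  have hsplit : ∫⁻ y in B, f y ≤ (∫⁻ y in B', f y) + 2⁻¹ * ∫⁻ y in B, f y := by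
    calc ∫⁻ y in B, f y = (∫⁻ y in B ∩ B', f y) + ∫⁻ y in B \ B', f y :=
          (lintegral_inter_add_sdiff f B measurableSet_ball).symm
      _ ≤ _ := by gcongr; exact inter_subset_right
  have hWt := hfin x r
  rw [← hB] at hWt
  have hhalf : ∫⁻ y in B, f y = 2⁻¹ * (∫⁻ y in B, f y) + 2⁻¹ * ∫⁻ y in B, f y := by
    rw [← add_mul, ENNReal.inv_two_add_inv_two, one_mul]
  have h3 : 2⁻¹ * (∫⁻ y in B, f y) ≤ ∫⁻ y in B', f y := by
    rw [hhalf] at hsplit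
    conv_rhs at hsplit => rw [← hhalf]
    exact (ENNReal.add_le_add_iff_right (ENNReal.mul_ne_top (by simp) hWt)).1 hsplit
  calc ∫⁻ y in B, f y = 2 * (2⁻¹ * ∫⁻ y in B, f y) := by
        rw [← mul_assoc, ENNReal.mul_inv_cancel (by simp) (by simp), one_mul]
    _ ≤ _ := by gcongr

/-- A function satisfying a reverse Hölder inequality is a doubling weight. -/
lemma exists_doubling {n : ℕ} {q : ℝ} (hq : 1 < q) {f : En n → ℝ≥0∞} (hf : Measurable f)
    (hfin : ∀ x r, ∫⁻ y in ball x r, f y ≠ ∞) {C : ℝ≥0} (hC : RevHolder f q C) :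
    ∃ D : ℝ≥0, ∀ x r, 0 < r →
      ∫⁻ y in ball x (5 * r), f y ≤ D * ∫⁻ y in ball x r, f y := by
  obtain ⟨σ, hσ0, hσ1, h⟩ := exists_shrink hq hf hfin hC
  have hit : ∀ (k : ℕ) (x : En n) (r : ℝ), 0 < r →
      ∫⁻ y in ball x r, f y ≤ 2 ^ k * ∫⁻ y in ball x (σ ^ k * r), f y := by
    intro k
    induction k with
    | zero => intro x r hr; simp
    | succ k ih =>
      intro x r hr
      calc ∫⁻ y in ball x r, f y ≤ 2 ^ k * ∫⁻ y in ball x (σ ^ k * r), f y := ih x r hr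
        _ ≤ 2 ^ k * (2 * ∫⁻ y in ball x (σ * (σ ^ k * r)), f y) := by
            gcongr; exact h x _ (by positivity)
        _ = _ := by rw [← mul_assoc, ← pow_succ, ← mul_assoc σ, ← pow_succ']
  obtain ⟨k, hk⟩ := exists_pow_lt_of_lt_one (show (0 : ℝ) < 1 / 5 by norm_num) hσ1
  refine ⟨2 ^ k, fun x r hr => (hit k x (5 * r) (by positivity)).trans ?_⟩
  push_cast
  gcongr
  nlinarith

/-- The reverse Hölder inequality with the mean of `f` taken over a ball five times smaller. -/
lemma exists_revHolder_five {n : ℕ} {q : ℝ} (hq : 1 < q) {f : En n → ℝ≥0∞} (hf : Measurable f)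
    (hfin : ∀ x r, ∫⁻ y in ball x r, f y ≠ ∞) {C : ℝ≥0} (hC : RevHolder f q C) :
    ∃ K : ℝ≥0, ∀ (x : En n) (r : ℝ), 0 < r → ∀ a : ℝ≥0∞,
      ∫⁻ y in ball x r, f y ≤ a * volume (ball x r) →
        ∫⁻ y in ball x (5 * r), f y ^ q ≤ K * a ^ q * volume (ball x r) := by
  obtain ⟨D, hD⟩ := exists_doubling hq hf hfin hC
  refine ⟨C * D ^ q * 5 ^ n, fun x r hr a ha => ?_⟩
  have h1 : ∫⁻ y in ball x (5 * r), f y ≤ (D * a) * volume (ball x (5 * r)) := by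
    calc ∫⁻ y in ball x (5 * r), f y ≤ D * ∫⁻ y in ball x r, f y := hD x r hr
      _ ≤ D * (a * volume (ball x (5 * r))) := by
          gcongr
          refine ha.trans ?_
          gcongr
          linarith
      _ = _ := by ring
  refine (hC x (5 * r) (by positivity) _ h1).trans (le_of_eq ?_)
  rw [volume_ball_mul x x (by norm_num : (0 : ℝ) < 5),
    ENNReal.mul_rpow_of_nonneg _ _ (by linarith)]
  push_cast
  rw [ENNReal.coe_rpow_of_nonneg _ (by linarith)]
  simp only [ENNReal.ofReal_ofNat]
  ring

/-! ### Homothetic balls and the level set estimate -/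

/-- The centre of the image of `ball x₀ R` under the homothety of centre `x` and ratio `r / R`.
This image is the ball of radius `r` around `homCenter x₀ R x r`. -/
def homCenter {n : ℕ} (x₀ : En n) (R : ℝ) (x : En n) (r : ℝ) : En n :=
  x + (r / R) • (x₀ - x)

section HomCenter

variable {n : ℕ} {x₀ x : En n} {R r : ℝ}

lemma dist_homCenter_lt (hx : x ∈ ball x₀ R) (hr : 0 < r) :
    dist x (homCenter x₀ R x r) < r := by
  have hR : 0 < R := pos_of_mem_ball hx
  rw [mem_ball, dist_comm, dist_eq_norm] at hx
  rw [homCenter, dist_self_add_right, norm_smul, Real.norm_of_nonneg (by positivity),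
    div_mul_eq_mul_div, div_lt_iff₀ hR]
  gcongr

lemma ball_homCenter_subset (hx : x ∈ ball x₀ R) (hrR : r ≤ R) :
    ball (homCenter x₀ R x r) r ⊆ ball x₀ R := by
  have hR : 0 < R := pos_of_mem_ball hx
  apply ball_subset_ball'
  rw [mem_ball, dist_eq_norm] at hx
  have h : homCenter x₀ R x r - x₀ = (1 - r / R) • (x - x₀) := by
    rw [homCenter]; module
  have h1 : 0 ≤ 1 - r / R := by
    rw [sub_nonneg, div_le_one hR]; exact hrR
  rw [dist_eq_norm, h, norm_smul, Real.norm_of_nonneg h1]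
  have : (1 - r / R) * ‖x - x₀‖ ≤ (1 - r / R) * R := by gcongr
  have h2 : (1 - r / R) * R = R - r := by field_simp
  linarith

lemma ball_homCenter_subset_two_mul (hx : x ∈ ball x₀ R) (hr : 0 < r) :
    ball (homCenter x₀ R x r) r ⊆ ball (homCenter x₀ R x (2 * r)) (2 * r) := by
  have hR : 0 < R := pos_of_mem_ball hx
  apply ball_subset_ball'
  rw [mem_ball, dist_eq_norm, norm_sub_rev] at hx
  have h : homCenter x₀ R x r - homCenter x₀ R x (2 * r) = (-(r / R)) • (x₀ - x) := by
    rw [homCenter, homCenter]; module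
  rw [dist_eq_norm, h, norm_smul, norm_neg, Real.norm_of_nonneg (by positivity)]
  have : r / R * ‖x₀ - x‖ ≤ r / R * R := by gcongr
  have h2 : r / R * R = r := by field_simp
  linarith

end HomCenter

/-- Lebesgue differentiation along the homothetic copies of `ball x₀ R`. -/
lemma ae_exists_ball {n : ℕ} {f : En n → ℝ≥0∞} (hf : Measurable f)
    (hfin : ∀ x r, ∫⁻ y in ball x r, f y ≠ ∞) (x₀ : En n) (R : ℝ) (t : ℝ≥0∞) :
    ∀ᵐ x, x ∈ ball x₀ R → t < f x → ∃ r, 0 < r ∧ r ≤ R ∧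
      t * volume (ball (homCenter x₀ R x r) r) < ∫⁻ y in ball (homCenter x₀ R x r) r, f y := by
  have hgfin : ∫⁻ y, (ball x₀ R).indicator f y ≠ ∞ := by
    rw [lintegral_indicator measurableSet_ball]; exact hfin x₀ R
  filter_upwards [(IsUnifLocDoublingMeasure.vitaliFamily (volume : Measure (En n)) 1
    ).ae_tendsto_lintegral_div' (hf.indicator measurableSet_ball) hgfin] with x hx hxB hxt
  have hR : 0 < R := pos_of_mem_ball hxB
  have hfil := IsUnifLocDoublingMeasure.tendsto_closedBall_filterAt (volume : Measure (En n))
    (K := 1) (x := x) (l := nhdsWithin (0 : ℝ) (Ioi 0)) (fun r => homCenter x₀ R x r) (fun r => r)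
    Filter.tendsto_id (by
      filter_upwards [self_mem_nhdsWithin] with r hr
      rw [one_mul, mem_closedBall]
      exact (dist_homCenter_lt hxB hr).le)
  have hlim := hx.comp hfil
  rw [indicator_of_mem hxB] at hlim
  have hev := hlim.eventually (lt_mem_nhds hxt)
  have hev2 : ∀ᶠ r in nhdsWithin (0 : ℝ) (Ioi 0), r ∈ Ioc 0 R := Ioc_mem_nhdsGT hR
  obtain ⟨r, h1, hr0, hrR⟩ := (hev.and hev2).exists
  refine ⟨r, hr0, hrR, ?_⟩
  simp only [Function.comp_apply] at h1
  have hae : (ball (homCenter x₀ R x r) r : Set (En n)) =ᵐ[volume]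
      closedBall (homCenter x₀ R x r) r := by
    refine ae_eq_of_subset_of_measure_ge ball_subset_closedBall ?_
      measurableSet_ball.nullMeasurableSet measure_closedBall_lt_top.ne
    rw [← ball_union_sphere]
    refine (measure_union_le _ _).trans ?_
    rw [Measure.addHaar_sphere_of_ne_zero volume _ hr0.ne', add_zero]
  rw [← measure_congr hae, ← setLIntegral_congr hae,
    ENNReal.lt_div_iff_mul_lt (Or.inl (measure_ball_pos volume _ hr0).ne')
      (Or.inl measure_ball_lt_top.ne),
    setLIntegral_indicator measurableSet_ball,
    inter_eq_self_of_subset_right (ball_homCenter_subset hxB hrR)] at h1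
  exact h1

/-- Stopping-time selection: a radius at which the mean of `f` exceeds `t`, but at twice which it
does not; the mean at the radius itself is then at most `2 ^ n * t`. -/
lemma exists_stopping_radius {n : ℕ} {f : En n → ℝ≥0∞}
    {x₀ x : En n} {R : ℝ} {t : ℝ≥0∞} (hx : x ∈ ball x₀ R)
    (ht : 2 ^ n * ∫⁻ y in ball x₀ R, f y ≤ t * volume (ball x₀ R))
    (h : ∃ r, 0 < r ∧ r ≤ R ∧
      t * volume (ball (homCenter x₀ R x r) r) < ∫⁻ y in ball (homCenter x₀ R x r) r, f y) :
    ∃ r, 0 < r ∧ r ≤ R ∧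
      t * volume (ball (homCenter x₀ R x r) r) < ∫⁻ y in ball (homCenter x₀ R x r) r, f y ∧
      ∫⁻ y in ball (homCenter x₀ R x r) r, f y
        ≤ 2 ^ n * t * volume (ball (homCenter x₀ R x r) r) := by
  have hR : 0 < R := pos_of_mem_ball hx
  set S : Set ℝ := {r | 0 < r ∧ r ≤ R ∧
      t * volume (ball (homCenter x₀ R x r) r) < ∫⁻ y in ball (homCenter x₀ R x r) r, f y}
    with hS
  obtain ⟨r₁, hr₁⟩ : S.Nonempty := h
  have hbdd : BddAbove S := ⟨R, fun r hr => hr.2.1⟩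
  -- radii larger than `R / 2` are excluded by the choice of `t`
  have hhalf : ∀ r ∈ S, 2 * r ≤ R := by
    rintro r ⟨hr0, hrR, hr⟩
    by_contra! hlt
    refine absurd hr (not_lt.2 ?_)
    have h2 : (2 : ℝ≥0∞) ^ n ≠ 0 := by simp
    have h2' : (2 : ℝ≥0∞) ^ n ≠ ∞ := by simp
    rw [← ENNReal.mul_le_mul_iff_right h2 h2']
    calc 2 ^ n * ∫⁻ y in ball (homCenter x₀ R x r) r, f y
        ≤ 2 ^ n * ∫⁻ y in ball x₀ R, f y := by
          gcongr; exact ball_homCenter_subset hx hrR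
      _ ≤ t * volume (ball x₀ R) := ht
      _ ≤ t * volume (ball x₀ (2 * r)) := by gcongr
      _ = 2 ^ n * (t * volume (ball (homCenter x₀ R x r) r)) := by
          rw [volume_ball_mul x₀ (homCenter x₀ R x r) two_pos]
          simp only [ENNReal.ofReal_ofNat]
          ring
  have hsup0 : 0 < sSup S := hr₁.1.trans_le (le_csSup hbdd hr₁)
  obtain ⟨r, hr, hlt⟩ := exists_lt_of_lt_csSup ⟨r₁, hr₁⟩ (half_lt_self hsup0)
  refine ⟨r, hr.1, hr.2.1, hr.2.2, ?_⟩
  have hnot : 2 * r ∉ S := fun hmem => by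
    have := le_csSup hbdd hmem
    linarith
  have hle : ∫⁻ y in ball (homCenter x₀ R x (2 * r)) (2 * r), f y
      ≤ t * volume (ball (homCenter x₀ R x (2 * r)) (2 * r)) := by
    by_contra! hcon
    exact hnot ⟨by linarith [hr.1], hhalf r hr, hcon⟩
  calc ∫⁻ y in ball (homCenter x₀ R x r) r, f y
      ≤ ∫⁻ y in ball (homCenter x₀ R x (2 * r)) (2 * r), f y :=
        lintegral_mono_set (ball_homCenter_subset_two_mul hx hr.1)
    _ ≤ t * volume (ball (homCenter x₀ R x (2 * r)) (2 * r)) := hle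
    _ = _ := by
        rw [volume_ball_mul _ (homCenter x₀ R x r) two_pos]
        simp only [ENNReal.ofReal_ofNat]
        ring

/-- The level set estimate underlying Gehring's lemma. The set where `f > 2 s` is covered by
enlargements of disjoint stopping balls contained in `ball x₀ R`; on each of them the reverse
Hölder inequality and doubling bound `∫ f ^ q` by `s ^ q` times the volume, and at least half of
`∫ f` comes from the set where `f > s`. -/
lemma exists_level_estimate {n : ℕ} {q : ℝ} (hq : 1 < q) {f : En n → ℝ≥0∞} (hf : Measurable f)
    (hfin : ∀ x r, ∫⁻ y in ball x r, f y ≠ ∞) {C : ℝ≥0} (hC : RevHolder f q C) :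
    ∃ K : ℝ≥0, ∀ (x₀ : En n) (R : ℝ) (s : ℝ≥0∞), s ≠ ∞ →
      2 ^ n * ∫⁻ y in ball x₀ R, f y ≤ s * volume (ball x₀ R) →
      ∫⁻ y in ball x₀ R ∩ {y | 2 * s < f y}, f y ^ q
        ≤ K * (s ^ (q - 1) * ∫⁻ y in ball x₀ R ∩ {y | s < f y}, f y) := by
  obtain ⟨K, hK⟩ := exists_revHolder_five hq hf hfin hC
  refine ⟨K * (2 ^ n * 2) ^ q, fun x₀ R s hs hsR => ?_⟩
  set c : En n → ℝ → En n := homCenter x₀ R with hc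
  set E : Set (En n) := ball x₀ R ∩ {y | s < f y} with hE
  have hEm : MeasurableSet {y | s < f y} := measurableSet_lt measurable_const hf
  set P : En n → ℝ → Prop := fun x r => 0 < r ∧ r ≤ R ∧
      2 * s * volume (ball (c x r) r) < ∫⁻ y in ball (c x r) r, f y ∧
      ∫⁻ y in ball (c x r) r, f y ≤ 2 ^ n * (2 * s) * volume (ball (c x r) r) with hP
  set T : Set (En n) := {x | x ∈ ball x₀ R ∧ ∃ r, P x r} with hT
  have hTae : ∀ᵐ x, x ∈ ball x₀ R ∩ {y | 2 * s < f y} → x ∈ T := by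
    filter_upwards [ae_exists_ball hf hfin x₀ R (2 * s)] with x hx hxm
    refine ⟨hxm.1, exists_stopping_radius hxm.1 (hsR.trans ?_) (hx hxm.1 hxm.2)⟩
    gcongr
    rw [two_mul]; exact le_self_add
  have hex : ∀ x, ∃ r, x ∈ T → P x r := fun x => by
    by_cases hx : x ∈ T
    · obtain ⟨r, hr⟩ := hx.2; exact ⟨r, fun _ => hr⟩
    · exact ⟨0, fun h => absurd h hx⟩
  choose ρ hρ using hex
  obtain ⟨u, huT, hdisj, hcov⟩ := Vitali.exists_disjoint_subfamily_covering_enlargement_ball T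
    (fun x => c x (ρ x)) ρ R (fun x hx => (hρ x hx).2.1) 5 (by norm_num)
  have hucount : u.Countable := hdisj.countable_of_isOpen (fun _ _ => isOpen_ball)
    (fun x hx => nonempty_ball.2 (hρ x (huT hx)).1)
  have := hucount.to_subtype
  have hball : ∀ x ∈ u, ∫⁻ y in ball (c x (ρ x)) (5 * ρ x), f y ^ q
      ≤ K * (2 ^ n * 2) ^ q * (s ^ (q - 1) *
        ∫⁻ y in ball (c x (ρ x)) (ρ x) ∩ {y | s < f y}, f y) := by
    intro x hx
    obtain ⟨h0, h1, h2, h3⟩ := hρ x (huT hx)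
    set B := ball (c x (ρ x)) (ρ x) with hB
    have hVt : volume B ≠ ∞ := measure_ball_lt_top.ne
    have hmass : s * volume B ≤ ∫⁻ y in B ∩ {y | s < f y}, f y := by
      have h4 : s * volume B + s * volume B
          ≤ (∫⁻ y in B ∩ {y | s < f y}, f y) + s * volume B := by
        calc s * volume B + s * volume B = 2 * s * volume B := by ring
          _ ≤ ∫⁻ y in B, f y := h2.le
          _ = (∫⁻ y in B ∩ {y | s < f y}, f y) + ∫⁻ y in B \ {y | s < f y}, f y :=
              (lintegral_inter_add_sdiff f B hEm).symm
          _ ≤ (∫⁻ y in B ∩ {y | s < f y}, f y) + s * volume B := by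
              gcongr
              calc ∫⁻ y in B \ {y | s < f y}, f y ≤ ∫⁻ y in B \ {y | s < f y}, s :=
                    setLIntegral_mono measurable_const fun y hy => not_lt.1 hy.2
                _ = s * volume (B \ {y | s < f y}) := by simp
                _ ≤ s * volume B := by gcongr; exact sdiff_subset
      exact (ENNReal.add_le_add_iff_right (ENNReal.mul_ne_top hs hVt)).1 h4
    calc ∫⁻ y in ball (c x (ρ x)) (5 * ρ x), f y ^ q
        ≤ K * (2 ^ n * (2 * s)) ^ q * volume B := hK _ _ h0 _ h3
      _ = K * (2 ^ n * 2) ^ q * (s ^ (q - 1) * (s * volume B)) := by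
          rw [← mul_assoc (2 ^ n), ENNReal.mul_rpow_of_nonneg _ _ (by linarith),
            rpow_eq_sub_one_mul hq s]
          ring
      _ ≤ _ := by gcongr
  calc ∫⁻ y in ball x₀ R ∩ {y | 2 * s < f y}, f y ^ q
      ≤ ∫⁻ y in ⋃ x : u, ball (c x (ρ x)) (5 * ρ x), f y ^ q := by
        refine lintegral_mono' (Measure.restrict_mono_ae ?_) le_rfl
        filter_upwards [hTae] with x hx hxm
        obtain ⟨b, hb, hsub⟩ := hcov x (hx hxm)
        refine mem_iUnion.2 ⟨⟨b, hb⟩, hsub ?_⟩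
        exact dist_homCenter_lt hxm.1 (hρ x (hx hxm)).1
    _ ≤ ∑' x : u, ∫⁻ y in ball (c x (ρ x)) (5 * ρ x), f y ^ q := lintegral_iUnion_le _ _
    _ ≤ ∑' x : u, K * (2 ^ n * 2) ^ q * (s ^ (q - 1) *
        ∫⁻ y in ball (c x (ρ x)) (ρ x) ∩ {y | s < f y}, f y) :=
        ENNReal.tsum_le_tsum fun x => hball x x.2
    _ = K * (2 ^ n * 2) ^ q * (s ^ (q - 1) *
        ∫⁻ y in ⋃ x ∈ u, ball (c x (ρ x)) (ρ x) ∩ {y | s < f y}, f y) := by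
        rw [ENNReal.tsum_mul_left, ENNReal.tsum_mul_left, lintegral_biUnion hucount
          (fun x _ => measurableSet_ball.inter hEm)
          (fun x hx y hy hxy => (hdisj hx hy hxy).mono inter_subset_left inter_subset_left)]
    _ ≤ K * (2 ^ n * 2) ^ q * (s ^ (q - 1) * ∫⁻ y in E, f y) := by
        gcongr
        refine iUnion₂_subset fun x hx => ?_
        obtain ⟨-, h1, -⟩ := hρ x (huT hx)
        exact inter_subset_inter_left _ (ball_homCenter_subset (huT hx).1 h1)
    _ = _ := by
        push_cast
        rw [ENNReal.coe_rpow_of_nonneg _ (by linarith)]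
        push_cast
        rfl

/-! ### Decay of level sets and higher integrability -/

/-- Geometric decay of the measure `f ^ q dx` of superlevel sets along levels in ratio `Λ`.
The level set estimate bounds this measure by `s ^ (q - 1) ∫ f` over `{s < f}`; the part of that
integral where `f > Λ s` is absorbed, as there `s ^ (q - 1) f ≤ Λ ^ (1 - q) f ^ q`. -/
lemma exists_level_decay {n : ℕ} {q : ℝ} (hq : 1 < q) {f : En n → ℝ≥0∞} (hf : Measurable f)
    (hfin : ∀ x r, ∫⁻ y in ball x r, f y ≠ ∞) {C : ℝ≥0} (hC : RevHolder f q C) :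
    ∃ Λ θ : ℝ≥0, 2 ≤ Λ ∧ θ < 1 ∧ ∀ (x₀ : En n) (R : ℝ) (s : ℝ≥0∞), s ≠ ∞ →
      ∫⁻ y in ball x₀ R, f y ^ q ≠ ∞ →
      2 ^ n * ∫⁻ y in ball x₀ R, f y ≤ s * volume (ball x₀ R) →
      ∫⁻ y in ball x₀ R ∩ {y | Λ * s < f y}, f y ^ q
        ≤ θ * ∫⁻ y in ball x₀ R ∩ {y | s < f y}, f y ^ q := by
  obtain ⟨K, hK⟩ := exists_level_estimate hq hf hfin hC
  have hq1 : 0 < q - 1 := by linarith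
  obtain ⟨Λ, hΛ2, hΛ⟩ : ∃ Λ : ℝ≥0, 2 ≤ Λ ∧ 2 * K ≤ Λ ^ (q - 1) := by
    refine ⟨max 2 ((2 * K) ^ (1 / (q - 1))), le_max_left _ _, ?_⟩
    calc 2 * K = ((2 * K) ^ (1 / (q - 1))) ^ (q - 1) := by
          rw [← NNReal.rpow_mul, one_div_mul_cancel hq1.ne', NNReal.rpow_one]
      _ ≤ _ := by gcongr; exact le_max_right _ _
  have h12 : 0 < 1 + 2 * K := by positivity
  refine ⟨Λ, 2 * K / (1 + 2 * K), hΛ2, ?_, fun x₀ R s hs hνfin hsR => ?_⟩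
  · rw [div_lt_one h12]; exact lt_one_add _
  have hm : ∀ t : ℝ≥0∞, MeasurableSet {y | t < f y} := fun t =>
    measurableSet_lt measurable_const hf
  have hsΛ : s ≤ Λ * s := by
    conv_lhs => rw [← one_mul s]
    gcongr
    exact_mod_cast one_le_two.trans hΛ2
  set E := ball x₀ R ∩ {y | s < f y} with hE
  set F := ball x₀ R ∩ {y | Λ * s < f y} with hF
  have hFE : F ⊆ E := inter_subset_inter_right _ fun y hy => lt_of_le_of_lt hsΛ hy
  have hFm : MeasurableSet F := measurableSet_ball.inter (hm _)
  have hEm : MeasurableSet E := measurableSet_ball.inter (hm _)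
  have hsplit : ∀ g : En n → ℝ≥0∞,
      ∫⁻ y in E, g y = (∫⁻ y in F, g y) + ∫⁻ y in E \ F, g y := fun g => by
    rw [← lintegral_inter_add_sdiff g E hFm, inter_eq_self_of_subset_right hFE]
  have hFfin : ∫⁻ y in F, f y ^ q ≠ ∞ :=
    ne_top_of_le_ne_top hνfin (lintegral_mono_set inter_subset_left)
  -- the middle layer
  have hA : s ^ (q - 1) * ∫⁻ y in E \ F, f y ≤ ∫⁻ y in E \ F, f y ^ q := by
    rw [← lintegral_const_mul _ hf]
    refine setLIntegral_mono (hf.pow_const q) fun y hy => ?_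
    exact rpow_sub_one_mul_le hq hy.1.2.le
  -- the top layer
  have hB : 2 * (K * (s ^ (q - 1) * ∫⁻ y in F, f y)) ≤ ∫⁻ y in F, f y ^ q := by
    calc 2 * (K * (s ^ (q - 1) * ∫⁻ y in F, f y))
        = (2 * K : ℝ≥0) * (s ^ (q - 1) * ∫⁻ y in F, f y) := by push_cast; ring
      _ ≤ (Λ ^ (q - 1) : ℝ≥0) * (s ^ (q - 1) * ∫⁻ y in F, f y) := by gcongr
      _ = (Λ * s) ^ (q - 1) * ∫⁻ y in F, f y := by
          rw [ENNReal.coe_rpow_of_nonneg _ hq1.le, ENNReal.mul_rpow_of_nonneg _ _ hq1.le]; ring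
      _ ≤ _ := by
          rw [← lintegral_const_mul _ hf]
          refine setLIntegral_mono (hf.pow_const q) fun y hy => ?_
          exact rpow_sub_one_mul_le hq hy.2.le
  have h1 : ∫⁻ y in F, f y ^ q ≤ K * (s ^ (q - 1) * ∫⁻ y in E, f y) := by
    refine le_trans (lintegral_mono_set ?_) (hK x₀ R s hs hsR)
    have h2Λ : 2 * s ≤ Λ * s := by
      gcongr
      exact_mod_cast hΛ2
    exact inter_subset_inter_right _ fun y hy => lt_of_le_of_lt h2Λ hy
  have h2 : ∫⁻ y in F, f y ^ q ≤ 2 * K * ∫⁻ y in E \ F, f y ^ q := by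
    have h3 : (∫⁻ y in F, f y ^ q) + ∫⁻ y in F, f y ^ q
        ≤ (∫⁻ y in F, f y ^ q) + 2 * K * ∫⁻ y in E \ F, f y ^ q := by
      calc (∫⁻ y in F, f y ^ q) + ∫⁻ y in F, f y ^ q = 2 * ∫⁻ y in F, f y ^ q := (two_mul _).symm
        _ ≤ 2 * (K * (s ^ (q - 1) * ∫⁻ y in E, f y)) := by gcongr
        _ = 2 * (K * (s ^ (q - 1) * ∫⁻ y in F, f y))
            + 2 * K * (s ^ (q - 1) * ∫⁻ y in E \ F, f y) := by rw [hsplit f]; ring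
        _ ≤ _ := by gcongr
    exact (ENNReal.add_le_add_iff_left hFfin).1 h3
  rw [ENNReal.coe_div h12.ne', mul_comm, ← mul_div_assoc,
    ENNReal.le_div_iff_mul_le (Or.inl (by exact_mod_cast h12.ne'))
      (Or.inl ENNReal.coe_ne_top),
    hsplit fun y => f y ^ q]
  push_cast
  calc (∫⁻ y in F, f y ^ q) * (1 + 2 * K)
      = (∫⁻ y in F, f y ^ q) + 2 * K * ∫⁻ y in F, f y ^ q := by ring
    _ ≤ 2 * K * (∫⁻ y in E \ F, f y ^ q) + 2 * K * ∫⁻ y in F, f y ^ q := by gcongr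
    _ = _ := by ring

/-- The layer-cake bound for a power, over levels in geometric progression. -/
lemma rpow_le_layers {Λ : ℝ≥0} (hΛ : 2 ≤ Λ) {ε : ℝ} (hε : 0 < ε) {s u : ℝ≥0∞} (hs : s ≠ 0)
    (hu : u ≠ ∞) :
    u ^ ε ≤ s ^ ε + ∑' k : ℕ, (Λ ^ (k + 1) * s) ^ ε * {v | Λ ^ k * s < v}.indicator 1 u := by
  classical
  by_cases hus : u ≤ s
  · exact le_trans (by gcongr) le_self_add
  have hΛ1 : 1 < Λ := lt_of_lt_of_le one_lt_two hΛ
  have hex : ∃ m : ℕ, u ≤ Λ ^ m * s := by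
    have hdiv : u / s ≠ ∞ := ENNReal.div_ne_top hu hs
    obtain ⟨m, hm⟩ := pow_unbounded_of_one_lt (u / s).toNNReal hΛ1
    refine ⟨m, ?_⟩
    have hle : u / s ≤ Λ ^ m := by
      rw [← ENNReal.coe_toNNReal hdiv]
      exact_mod_cast hm.le
    by_cases hst : s = ∞
    · exact absurd (hst ▸ le_top) hus
    · exact (ENNReal.div_le_iff hs hst).1 hle
  have hm := Nat.find_spec hex
  obtain ⟨k, hk⟩ : ∃ k, Nat.find hex = k + 1 := Nat.exists_eq_succ_of_ne_zero fun h0 => by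
    rw [h0] at hm; simp at hm; exact hus hm
  have hlt : Λ ^ k * s < u := not_le.1 (Nat.find_min hex (by omega))
  rw [hk] at hm
  refine le_trans ?_ (le_add_self)
  refine le_trans ?_ (ENNReal.le_tsum k)
  rw [indicator_of_mem (show u ∈ {v | (Λ : ℝ≥0∞) ^ k * s < v} from hlt)]
  simp only [Pi.one_apply, mul_one]
  gcongr

/-- A small power of `Λ` preserves the geometric decay of rate `θ`. -/
lemma exists_gain {Λ θ : ℝ≥0} (hΛ : 2 ≤ Λ) (hθ : θ < 1) :
    ∃ ε : ℝ, 0 < ε ∧ Λ ^ ε * θ < 1 := by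
  have hΛ1 : (1 : ℝ) < Λ := by exact_mod_cast (_root_.one_lt_two (α := ℝ≥0)).trans_le hΛ
  have hθr : (θ : ℝ) < 1 := by exact_mod_cast hθ
  have hM : (1 : ℝ) < 2 / (1 + θ) := by
    rw [lt_div_iff₀ (by positivity)]; linarith
  refine ⟨Real.logb Λ (2 / (1 + θ)), Real.logb_pos hΛ1 hM, ?_⟩
  rw [← NNReal.coe_lt_coe]
  push_cast
  rw [Real.rpow_logb (by linarith) hΛ1.ne' (by linarith), div_mul_eq_mul_div,
    div_lt_one (by positivity)]
  linarith

/-- Gehring's lemma: the reverse Hölder inequality self-improves. The hypothesis `f ≠ ∞` puts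
every point with `f > s` in a layer `Λ ^ k s < f ≤ Λ ^ (k + 1) s`, and `a ≠ 0` makes
the lowest level positive. -/
lemma exists_revHolder_gt {n : ℕ} {q : ℝ} (hq : 1 < q) {f : En n → ℝ≥0∞} (hf : Measurable f)
    (hftop : ∀ x, f x ≠ ∞) (hfin : ∀ x r, ∫⁻ y in ball x r, f y ≠ ∞) {C : ℝ≥0}
    (hC : RevHolder f q C) :
    ∃ p : ℝ, q < p ∧ ∃ K : ℝ≥0, ∀ (x : En n) (r : ℝ), 0 < r → ∀ a : ℝ≥0∞, a ≠ 0 → a ≠ ∞ →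
      ∫⁻ y in ball x r, f y ≤ a * volume (ball x r) →
        ∫⁻ y in ball x r, f y ^ p ≤ K * a ^ p * volume (ball x r) := by
  obtain ⟨Λ, θ, hΛ, hθ, hdecay⟩ := exists_level_decay hq hf hfin hC
  obtain ⟨ε, hε, hgain⟩ := exists_gain hΛ hθ
  have hΛ1 : 1 ≤ Λ := one_le_two.trans hΛ
  set M : ℝ≥0∞ := (Λ : ℝ≥0∞) ^ ε with hM
  have hMt : M ≠ ∞ := ENNReal.rpow_ne_top_of_nonneg hε.le (by simp)
  have hMθ : M * θ < 1 := by
    rw [hM, ← ENNReal.coe_rpow_of_nonneg _ hε.le]; exact_mod_cast hgain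
  -- the sum of the layers
  set L : ℝ≥0∞ := 1 + M * (1 - M * θ)⁻¹ with hL
  have hLt : L ≠ ∞ := by
    refine ENNReal.add_ne_top.2 ⟨by simp, ENNReal.mul_ne_top hMt (ENNReal.inv_ne_top.2 ?_)⟩
    exact (tsub_pos_of_lt hMθ).ne'
  set K : ℝ≥0∞ := L * (2 ^ n) ^ ε * C with hKdef
  have hKt : K ≠ ∞ := ENNReal.mul_ne_top (ENNReal.mul_ne_top hLt
    (ENNReal.rpow_ne_top_of_nonneg hε.le (by simp))) (by simp)
  refine ⟨q + ε, by linarith, K.toNNReal, fun x r hr a ha0 hat haW => ?_⟩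
  rw [ENNReal.coe_toNNReal hKt]
  set B := ball x r with hB
  set s : ℝ≥0∞ := 2 ^ n * a with hs
  have hs0 : s ≠ 0 := mul_ne_zero (by simp) ha0
  have hst : s ≠ ∞ := ENNReal.mul_ne_top (by simp) hat
  have hν := hC x r hr a haW
  have hνfin : ∫⁻ y in B, f y ^ q ≠ ∞ := ne_top_of_le_ne_top
    (ENNReal.mul_ne_top (ENNReal.mul_ne_top (by simp)
      (ENNReal.rpow_ne_top_of_nonneg (by linarith) hat)) measure_ball_lt_top.ne) hν
  have hpow : ∀ k : ℕ, ∫⁻ y in B ∩ {y | Λ ^ k * s < f y}, f y ^ q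
      ≤ θ ^ k * ∫⁻ y in B, f y ^ q := by
    intro k
    induction k with
    | zero => simpa using lintegral_mono_set inter_subset_left
    | succ k ih =>
      have h1 := hdecay x r (Λ ^ k * s) (ENNReal.mul_ne_top (by simp) hst) hνfin (by
        calc 2 ^ n * ∫⁻ y in B, f y ≤ 2 ^ n * (a * volume B) := by gcongr
          _ = 1 * s * volume B := by rw [hs]; ring
          _ ≤ Λ ^ k * s * volume B := by
            gcongr
            exact_mod_cast one_le_pow₀ hΛ1)
      rw [pow_succ', mul_assoc (Λ : ℝ≥0∞)]
      calc _ ≤ _ := h1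
        _ ≤ θ * (θ ^ k * ∫⁻ y in B, f y ^ q) := by gcongr
        _ = _ := by rw [pow_succ']; ring
  have hm : ∀ t : ℝ≥0∞, MeasurableSet {y | t < f y} := fun t =>
    measurableSet_lt measurable_const hf
  calc ∫⁻ y in B, f y ^ (q + ε)
      ≤ ∫⁻ y in B, (s ^ ε * f y ^ q + ∑' k : ℕ, (Λ ^ (k + 1) * s) ^ ε *
          {y | Λ ^ k * s < f y}.indicator (fun y => f y ^ q) y) := by
        refine lintegral_mono fun y => ?_
        rw [ENNReal.rpow_add_of_nonneg _ _ (by linarith) hε.le, mul_comm]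
        refine (mul_le_mul_left (rpow_le_layers hΛ hε hs0 (hftop y)) _).trans_eq ?_
        rw [add_mul, ← ENNReal.tsum_mul_right]
        congr 2
        funext k
        by_cases hk : Λ ^ k * s < f y
        · simp [indicator, hk]
        · simp [indicator, hk]
    _ = s ^ ε * (∫⁻ y in B, f y ^ q) + ∑' k : ℕ, (Λ ^ (k + 1) * s) ^ ε *
          ∫⁻ y in B ∩ {y | Λ ^ k * s < f y}, f y ^ q := by
        rw [lintegral_add_left ((hf.pow_const q).const_mul _),
          lintegral_const_mul _ (hf.pow_const q), lintegral_tsum fun k =>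
            (((hf.pow_const q).indicator (hm _)).const_mul _).aemeasurable]
        congr 2
        funext k
        rw [lintegral_const_mul _ ((hf.pow_const q).indicator (hm _)),
          setLIntegral_indicator (hm _), inter_comm]
    _ ≤ s ^ ε * (∫⁻ y in B, f y ^ q) + ∑' k : ℕ, (Λ ^ (k + 1) * s) ^ ε *
          (θ ^ k * ∫⁻ y in B, f y ^ q) := by
        gcongr with k
        exact hpow k
    _ = L * s ^ ε * ∫⁻ y in B, f y ^ q := by
        have hterm : ∀ k : ℕ, ((Λ : ℝ≥0∞) ^ (k + 1) * s) ^ ε * (θ ^ k * ∫⁻ y in B, f y ^ q)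
            = (M * θ) ^ k * (M * s ^ ε * ∫⁻ y in B, f y ^ q) := fun k => by
          rw [ENNReal.mul_rpow_of_nonneg _ _ hε.le, ← ENNReal.rpow_natCast, ← ENNReal.rpow_mul,
            mul_comm ((k + 1 : ℕ) : ℝ), ENNReal.rpow_mul, ENNReal.rpow_natCast, ← hM]
          ring
        simp_rw [hterm]
        rw [ENNReal.tsum_mul_right, ENNReal.tsum_geometric, hL]
        ring
    _ ≤ L * s ^ ε * (C * a ^ q * volume B) := by gcongr
    _ = K * a ^ (q + ε) * volume B := by
        rw [hs, ENNReal.mul_rpow_of_nonneg _ _ hε.le,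
          ENNReal.rpow_add_of_nonneg _ _ (by linarith) hε.le, hKdef]
        ring

/-- self-improvement of reverse Hölder classes — if `w ∈ RH_q`, `1 < q < ∞`,
then `w ∈ RH_p` for some `q < p < ∞`. -/
theorem statement11
    (n : ℕ) (q : ℝ) (hq : 1 < q)
    (w : En n → ℝ) (hw0 : ∀ x, 0 ≤ w x) (hwloc : LocallyIntegrable w volume)
    (hw : MemRH w q) :
    ∃ p : ℝ, q < p ∧ MemRH w p := by
  have hq0 : 0 < q := by linarith
  have haem : AEMeasurable w volume := hwloc.aestronglyMeasurable.aemeasurable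
  -- a measurable representative of `w`; the integrals in `MemRH` do not see the difference
  set f : En n → ℝ≥0∞ := fun x => ENNReal.ofReal (haem.mk w x) with hfdef
  have hf : Measurable f := haem.measurable_mk.ennreal_ofReal
  have hae : ∀ᵐ x, ENNReal.ofReal (w x) = f x := by
    filter_upwards [haem.ae_eq_mk] with x hx
    rw [hfdef, hx]
  have hint : ∀ x r, ∫⁻ y in ball x r, ENNReal.ofReal (w y) = ∫⁻ y in ball x r, f y :=
    fun x r => lintegral_congr_ae (ae_restrict_of_ae hae)
  have hintp : ∀ (p : ℝ) x r,
      ∫⁻ y in ball x r, ENNReal.ofReal (w y) ^ p = ∫⁻ y in ball x r, f y ^ p :=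
    fun p x r => lintegral_congr_ae (ae_restrict_of_ae (hae.mono fun y hy => by
      simp only [hy]))
  have hfin : ∀ x r, ∫⁻ y in ball x r, f y ≠ ∞ := fun x r => by
    rw [← hint]
    have h1 : IntegrableOn w (ball x r) :=
      (hwloc.integrableOn_isCompact (isCompact_closedBall x r)).mono_set ball_subset_closedBall
    exact h1.lintegral_lt_top.ne
  obtain ⟨C, hC⟩ := hw
  have hrev : RevHolder f q (C ^ q) := fun x r hr a ha => by
    have hV0 : volume (ball x r) ≠ 0 := (measure_ball_pos volume x hr).ne'
    have hVt : volume (ball x r) ≠ ∞ := measure_ball_lt_top.ne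
    have h := hC x r hr
    rw [hint, hintp] at h
    have h2 : ((∫⁻ y in ball x r, f y ^ q) / volume (ball x r)) ^ (1 / q) ≤ C * a :=
      h.trans (by gcongr; exact ENNReal.div_le_of_le_mul ha)
    rw [one_div, ENNReal.rpow_inv_le_iff hq0, ENNReal.mul_rpow_of_nonneg _ _ hq0.le,
      ENNReal.div_le_iff hV0 hVt] at h2
    rwa [ENNReal.coe_rpow_of_nonneg _ hq0.le]
  obtain ⟨p, hqp, K, hK⟩ := exists_revHolder_gt hq hf (fun x => by simp [hfdef]) hfin hrev
  have hp0 : 0 < p := hq0.trans hqp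
  refine ⟨p, hqp, K ^ (1 / p), fun x r hr => ?_⟩
  rw [hint, hintp]
  have hV0 : volume (ball x r) ≠ 0 := (measure_ball_pos volume x hr).ne'
  have hVt : volume (ball x r) ≠ ∞ := measure_ball_lt_top.ne
  by_cases hW : ∫⁻ y in ball x r, f y = 0
  · have hz : ∫⁻ y in ball x r, f y ^ p = 0 := by
      rw [lintegral_eq_zero_iff hf] at hW
      rw [lintegral_eq_zero_iff (hf.pow_const p)]
      filter_upwards [hW] with y hy
      simp only [Pi.zero_apply] at hy
      simp [hy, hp0]
    rw [hz, ENNReal.zero_div, ENNReal.zero_rpow_of_pos (by positivity)]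
    exact zero_le
  · set a := (∫⁻ y in ball x r, f y) / volume (ball x r) with ha
    have h := hK x r hr a (ENNReal.div_pos hW hVt).ne' (ENNReal.div_ne_top (hfin x r) hV0)
      (ENNReal.div_mul_cancel hV0 hVt).ge
    rw [one_div, ENNReal.rpow_inv_le_iff hp0, ENNReal.mul_rpow_of_nonneg _ _ hp0.le,
      ENNReal.div_le_iff hV0 hVt, ENNReal.coe_rpow_of_nonneg _ (by positivity),
      ENNReal.rpow_inv_rpow hp0.ne']
    exact h

end
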